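/- arXiv:0705.1171 — 3 statements merged into one kernel-verified Lean document; each statement's English description precedes it below -/
import Mathlib

section
/- If A is a simple cusp algebra, then ord(A) = 2·cod(A) − 1. -/
/-!
The set of orders of vanishing at `0` of elements of `A` is a numerical semigroup `S`. Contact one
means `1 ∉ S` and `2 ∈ S`, so `S` consists of all even numbers and of the odd numbers `≥ 2m + 1`,
where `2m + 1` is the least odd element of `S` and `m ≥ 1`. The gaps `1, 3, …, 2m - 1` of `S` index
a basis `z, z³, …, z^(2m-1)` of `O(𝔻)/A`, so `cod A = m`; and `2m` is the conductor of `S`, so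
`z^(2m) O(𝔻) ⊆ A` while `z^(2m-1) O(𝔻) ⊈ A`, so `ord A = 2m - 1`.

The predicate `Lead n f` encodes "`f` vanishes at `0` to order exactly `n`"; the descent lemma
`zO_le_of_lead` turns information about orders into inclusions of subspaces.
-/

open scoped Classical

noncomputable section

/-- The open unit disk in `ℂ`. -/
def 𝔻 : Set ℂ := Metric.ball 0 1

lemma zero_mem_disk : (0 : ℂ) ∈ 𝔻 := Metric.mem_ball_self one_pos

/-- The origin, as a point of the disk. -/
def d0 : 𝔻 := ⟨0, zero_mem_disk⟩

/-- A function on the disk is holomorphic if it agrees on `𝔻` with a function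
that is (complex) differentiable on `𝔻`. -/
def IsHolo (f : 𝔻 → ℂ) : Prop :=
  ∃ F : ℂ → ℂ, DifferentiableOn ℂ F 𝔻 ∧ ∀ z : 𝔻, f z = F z

/-- `O(𝔻)`: the algebra of all holomorphic functions on the disk. -/
def HolDisk : Subalgebra ℂ (𝔻 → ℂ) where
  carrier := {f | IsHolo f}
  mul_mem' := by
    rintro f g ⟨F, hF, hf⟩ ⟨G, hG, hg⟩
    exact ⟨F * G, hF.mul hG, fun z => by simp [hf z, hg z]⟩
  add_mem' := by
    rintro f g ⟨F, hF, hf⟩ ⟨G, hG, hg⟩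
    exact ⟨F + G, hF.add hG, fun z => by simp [hf z, hg z]⟩
  one_mem' := ⟨fun _ => 1, differentiableOn_const 1, fun _ => rfl⟩
  zero_mem' := ⟨fun _ => 0, differentiableOn_const 0, fun _ => rfl⟩
  algebraMap_mem' := fun c => ⟨fun _ => c, differentiableOn_const c, fun _ => rfl⟩

/-- The `j`-th complex derivative of a holomorphic function on the disk, at a
point `a` (junk value `0` for non-holomorphic functions).  This is well defined
on `𝔻` since any two extensions agree on the open set `𝔻`. -/
def der (j : ℕ) (a : ℂ) (f : 𝔻 → ℂ) : ℂ :=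
  if h : IsHolo f then iteratedDeriv j h.choose a else 0

/-- The `k`-th Taylor coefficient at `0` of a holomorphic function on the disk. -/
def taylorCoeff (k : ℕ) (f : 𝔻 → ℂ) : ℂ := der k 0 f / (Nat.factorial k : ℂ)

/-- The coordinate function `z` on the disk. -/
def zfun : 𝔻 → ℂ := fun z => (z : ℂ)

/-- `z^m O(𝔻)`, as a subspace of functions on the disk. -/
def zO (m : ℕ) : Submodule ℂ (𝔻 → ℂ) where
  carrier := {f | ∃ g, IsHolo g ∧ f = zfun ^ m * g}
  add_mem' := by
    rintro f₁ f₂ ⟨g₁, hg₁, rfl⟩ ⟨g₂, hg₂, rfl⟩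
    exact ⟨g₁ + g₂, add_mem (show g₁ ∈ HolDisk from hg₁) (show g₂ ∈ HolDisk from hg₂),
      by ring⟩
  zero_mem' := ⟨0, (HolDisk : Subalgebra ℂ (𝔻 → ℂ)).zero_mem, by simp⟩
  smul_mem' := by
    rintro c f ⟨g, hg, rfl⟩
    exact ⟨c • g, SMulMemClass.smul_mem c (show g ∈ HolDisk from hg), by
      ext z; simp [zfun]; ring⟩

/-- The quotient vector space `O(𝔻)/A`. -/
abbrev OmodA (A : Subalgebra ℂ (𝔻 → ℂ)) :=
  HolDisk.toSubmodule ⧸ (A.toSubmodule.comap HolDisk.toSubmodule.subtype)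

/-- `cod(A) = dim O(𝔻)/A`. -/
def cod (A : Subalgebra ℂ (𝔻 → ℂ)) : ℕ := Module.finrank ℂ (OmodA A)

/-- `ord(A) = min {k : z^{k+1} O(𝔻) ⊆ A}`. -/
def ord (A : Subalgebra ℂ (𝔻 → ℂ)) : ℕ :=
  sInf {k : ℕ | (zO (k + 1) : Set (𝔻 → ℂ)) ⊆ (A : Set (𝔻 → ℂ))}

/-- `con(A) = max {n : f⁽ʲ⁾(0) = 0 for all f ∈ A and all 1 ≤ j ≤ n}`. -/
def con (A : Subalgebra ℂ (𝔻 → ℂ)) : ℕ :=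
  sSup {n : ℕ | ∀ f ∈ A, ∀ j, 1 ≤ j → j ≤ n → der j 0 f = 0}

/-- A cusp algebra: a unital subalgebra of `O(𝔻)` of finite codimension
containing `z^m O(𝔻)` for some `m ≥ 2`. -/
def IsCuspAlgebra (A : Subalgebra ℂ (𝔻 → ℂ)) : Prop :=
  A ≤ HolDisk ∧ FiniteDimensional ℂ (OmodA A) ∧
    ∃ m, 2 ≤ m ∧ (zO m : Set (𝔻 → ℂ)) ⊆ (A : Set (𝔻 → ℂ))

/-- A simple cusp algebra: a cusp algebra of contact one. -/
def IsSimpleCuspAlgebra (A : Subalgebra ℂ (𝔻 → ℂ)) : Prop :=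
  IsCuspAlgebra A ∧ con A = 1

/-- A primitive for a simple cusp algebra:  `π ∈ A` with `π(0) = 0`,
`π'(0) = 0`, `π''(0) = 2`. -/
def IsPrimitive (A : Subalgebra ℂ (𝔻 → ℂ)) (π : 𝔻 → ℂ) : Prop :=
  π ∈ A ∧ π d0 = 0 ∧ der 1 0 π = 0 ∧ der 2 0 π = 2

/-- `A_n = A ∩ z^{2n} O(𝔻)`. -/
def An (A : Subalgebra ℂ (𝔻 → ℂ)) (n : ℕ) : Submodule ℂ (𝔻 → ℂ) :=
  A.toSubmodule ⊓ zO (2 * n)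

/-- `E_n = A_n / A_{n+1}`. -/
abbrev En (A : Subalgebra ℂ (𝔻 → ℂ)) (n : ℕ) :=
  An A n ⧸ ((An A (n + 1)).comap (An A n).subtype)


/-! ### Orders of vanishing at the origin -/

/-- `f` is holomorphic and vanishes at `0` to order exactly `n`, i.e. `f = z^n u` with
`u(0) ≠ 0`. -/
def Lead (n : ℕ) (f : 𝔻 → ℂ) : Prop :=
  ∃ u, IsHolo u ∧ u d0 ≠ 0 ∧ f = zfun ^ n * u

lemma isHolo_zfun : IsHolo zfun := ⟨fun z => z, differentiableOn_id, fun _ => rfl⟩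

lemma isHolo_mul {f g : 𝔻 → ℂ} (hf : IsHolo f) (hg : IsHolo g) : IsHolo (f * g) :=
  HolDisk.mul_mem hf hg

lemma isHolo_pow {f : 𝔻 → ℂ} (hf : IsHolo f) (n : ℕ) : IsHolo (f ^ n) :=
  HolDisk.pow_mem hf n

lemma isHolo_one : IsHolo 1 := HolDisk.one_mem

lemma isHolo_sub_const {f : 𝔻 → ℂ} (hf : IsHolo f) (c : ℂ) :
    IsHolo (f - algebraMap ℂ (𝔻 → ℂ) c) :=
  HolDisk.sub_mem hf (HolDisk.algebraMap_mem c)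

lemma isHolo_continuous {f : 𝔻 → ℂ} (hf : IsHolo f) : Continuous f := by
  obtain ⟨F, hF, h⟩ := hf
  have : f = 𝔻.domRestrict F := funext h
  rw [this]
  exact hF.continuousOn.domRestrict

lemma disk_mem_nhds : 𝔻 ∈ nhds (0 : ℂ) := Metric.ball_mem_nhds _ one_pos

lemma isOpen_disk : IsOpen 𝔻 := Metric.isOpen_ball

/-- A holomorphic function vanishing at `0` is divisible by `z`. -/
lemma exists_eq_zfun_mul {u : 𝔻 → ℂ} (hu : IsHolo u) (h0 : u d0 = 0) :
    ∃ v, IsHolo v ∧ u = zfun * v := by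
  obtain ⟨U, hU, h⟩ := hu
  refine ⟨fun z => dslope U 0 z, ⟨dslope U 0, ?_, fun _ => rfl⟩, ?_⟩
  · exact (Complex.differentiableOn_dslope disk_mem_nhds).2 hU
  · ext z
    have hU0 : U 0 = 0 := (h d0).symm.trans h0
    have := sub_smul_dslope U 0 (z : ℂ)
    simp only [sub_zero, hU0, smul_eq_mul] at this
    simp [zfun, h z, this]

/-- Powers of `z` may be cancelled: the two cofactors agree off `0`, hence at `0` by continuity. -/
lemma zfun_pow_cancel {n : ℕ} {u v : 𝔻 → ℂ} (hu : IsHolo u) (hv : IsHolo v)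
    (h : zfun ^ n * u = zfun ^ n * v) : u = v := by
  obtain ⟨U, hU, hUu⟩ := hu
  obtain ⟨V, hV, hVv⟩ := hv
  have key : ∀ z : 𝔻, (z : ℂ) ≠ 0 → U z = V z := by
    intro z hz
    have := congrFun h z
    simp only [Pi.mul_apply, Pi.pow_apply, zfun] at this
    rw [← hUu, ← hVv]
    exact mul_left_cancel₀ (pow_ne_zero n hz) this
  have h0 : U 0 = V 0 := by
    have hUc := (hU.differentiableAt disk_mem_nhds).continuousAt
    have hVc := (hV.differentiableAt disk_mem_nhds).continuousAt
    refine tendsto_nhds_unique (l := nhdsWithin (0 : ℂ) {0}ᶜ)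
      (hUc.tendsto.mono_left nhdsWithin_le_nhds)
      (Filter.Tendsto.congr' ?_ (hVc.tendsto.mono_left nhdsWithin_le_nhds))
    filter_upwards [self_mem_nhdsWithin, mem_nhdsWithin_of_mem_nhds disk_mem_nhds] with z hz hzd
    exact (key ⟨z, hzd⟩ hz).symm
  ext z
  rw [hUu, hVv]
  by_cases hz : (z : ℂ) = 0
  · rw [hz, h0]
  · exact key z hz

lemma zO_anti {a b : ℕ} (h : a ≤ b) : zO b ≤ zO a := by
  rintro f ⟨g, hg, rfl⟩
  refine ⟨zfun ^ (b - a) * g, isHolo_mul (isHolo_pow isHolo_zfun _) hg, ?_⟩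
  rw [← mul_assoc, ← pow_add, Nat.add_sub_cancel' h]

lemma zfun_pow_mem (n : ℕ) : zfun ^ n ∈ zO n := ⟨1, isHolo_one, by simp⟩

lemma lead_zfun_pow (n : ℕ) : Lead n (zfun ^ n) := ⟨1, isHolo_one, by simp, by simp⟩

lemma Lead.mem {n : ℕ} {f : 𝔻 → ℂ} (h : Lead n f) : f ∈ zO n := by
  obtain ⟨u, hu, -, rfl⟩ := h
  exact ⟨u, hu, rfl⟩

lemma Lead.mul {a b : ℕ} {f g : 𝔻 → ℂ} (hf : Lead a f) (hg : Lead b g) :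
    Lead (a + b) (f * g) := by
  obtain ⟨u, hu, hu0, rfl⟩ := hf
  obtain ⟨v, hv, hv0, rfl⟩ := hg
  exact ⟨u * v, isHolo_mul hu hv, mul_ne_zero hu0 hv0, by ring⟩

lemma Lead.pow {a : ℕ} {f : 𝔻 → ℂ} (hf : Lead a f) (k : ℕ) : Lead (a * k) (f ^ k) := by
  obtain ⟨u, hu, hu0, rfl⟩ := hf
  exact ⟨u ^ k, isHolo_pow hu k, pow_ne_zero k hu0, by rw [mul_pow, pow_mul]⟩

lemma Lead.notMem {n : ℕ} {f : 𝔻 → ℂ} (h : Lead n f) : f ∉ zO (n + 1) := by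
  obtain ⟨u, hu, hu0, rfl⟩ := h
  rintro ⟨v, hv, h⟩
  rw [pow_succ, mul_assoc] at h
  have := zfun_pow_cancel hu (isHolo_mul isHolo_zfun hv) h
  exact hu0 (by rw [this]; simp [zfun, d0])

lemma mem_succ_or_lead {n : ℕ} {f : 𝔻 → ℂ} (h : f ∈ zO n) : f ∈ zO (n + 1) ∨ Lead n f := by
  obtain ⟨u, hu, rfl⟩ := h
  by_cases hu0 : u d0 = 0
  · obtain ⟨v, hv, rfl⟩ := exists_eq_zfun_mul hu hu0
    exact Or.inl ⟨v, hv, by ring⟩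
  · exact Or.inr ⟨u, hu, hu0, rfl⟩

/-- An element `w` of exact order `n` spans `z^n O(𝔻)` modulo `z^(n+1) O(𝔻)`. -/
lemma Lead.exists_sub_smul_mem {n : ℕ} {w f : 𝔻 → ℂ} (hw : Lead n w) (hf : f ∈ zO n) :
    ∃ c : ℂ, f - c • w ∈ zO (n + 1) := by
  obtain ⟨u, hu, hu0, rfl⟩ := hw
  obtain ⟨g, hg, rfl⟩ := hf
  have hh : IsHolo (g - (g d0 / u d0) • u) := HolDisk.sub_mem hg (HolDisk.smul_mem hu _)
  obtain ⟨v, hv, hv'⟩ := exists_eq_zfun_mul hh (by simp [hu0])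
  refine ⟨g d0 / u d0, v, hv, ?_⟩
  rw [pow_succ, mul_assoc, ← hv', mul_sub, mul_smul_comm]

/-- If a subspace contains `z^M O(𝔻)` and elements of every exact order `n ≥ N`, then it contains
`z^N O(𝔻)`. -/
lemma zO_le_of_lead (W : Submodule ℂ (𝔻 → ℂ)) {M N : ℕ} (hM : zO M ≤ W)
    (hW : ∀ n, N ≤ n → ∃ w ∈ W, Lead n w) : zO N ≤ W := by
  have key : ∀ k n, N ≤ n → n + k = N + M → zO n ≤ W := by
    intro k
    induction k with
    | zero => intro n _ h; exact (zO_anti (by omega)).trans hM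
    | succ k ih =>
      intro n hn h f hf
      obtain ⟨w, hwW, hw⟩ := hW n hn
      obtain ⟨c, hc⟩ := hw.exists_sub_smul_mem hf
      have := W.add_mem (ih (n + 1) (by omega) (by omega) hc) (W.smul_mem c hwW)
      simpa using this
  exact key M N le_rfl rfl

/-! ### Derivatives at the origin -/

lemma hasDerivAt_mul_zero {H : ℂ → ℂ} (hH : DifferentiableAt ℂ H 0) :
    HasDerivAt (fun z => z * H z) (H 0) 0 := by
  have h := (hasDerivAt_id' (0 : ℂ)).mul hH.hasDerivAt
  rw [one_mul, zero_mul, add_zero] at h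
  exact h

lemma der_one_of_lead {f : 𝔻 → ℂ} (hf : IsHolo f) (h : Lead 1 f) : der 1 0 f ≠ 0 := by
  obtain ⟨u, ⟨U, hU, hUu⟩, hu0, rfl⟩ := h
  rw [der, dif_pos hf, iteratedDeriv_one]
  have hspec := hf.choose_spec.2
  have he : hf.choose =ᶠ[nhds 0] fun z => z * U z := by
    filter_upwards [disk_mem_nhds] with z hz
    rw [← hspec ⟨z, hz⟩]
    simp [zfun, hUu]
  rw [he.deriv_eq, (hasDerivAt_mul_zero (hU.differentiableAt disk_mem_nhds)).deriv]
  exact fun h => hu0 ((hUu d0).trans h)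

lemma der_two_eq_zero {f : 𝔻 → ℂ} (hf : IsHolo f) (c : ℂ)
    (h : f - algebraMap ℂ (𝔻 → ℂ) c ∈ zO 3) : der 2 0 f = 0 := by
  obtain ⟨u, ⟨U, hU, hUu⟩, h⟩ := h
  rw [der, dif_pos hf, iteratedDeriv_succ, iteratedDeriv_one]
  have hspec := hf.choose_spec.2
  have he : hf.choose =ᶠ[nhds 0] fun z => c + z ^ 3 * U z := by
    filter_upwards [disk_mem_nhds] with z hz
    rw [← hspec ⟨z, hz⟩]
    have := congrFun h ⟨z, hz⟩
    simp only [Pi.sub_apply, Pi.algebraMap_apply, Algebra.algebraMap_self, RingHom.id_apply,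
      Pi.mul_apply, Pi.pow_apply, zfun, hUu] at this
    linear_combination this
  have hd : deriv (fun z => c + z ^ 3 * U z) =ᶠ[nhds 0]
      fun z => z * (z * (3 * U z + z * deriv U z)) := by
    filter_upwards [disk_mem_nhds] with z hz
    have hUz := (hU.differentiableAt (isOpen_disk.mem_nhds hz)).hasDerivAt
    have := (((hasDerivAt_pow 3 z).mul hUz).const_add c).deriv
    refine Eq.trans this ?_
    push_cast
    ring
  have hU0 := hU.differentiableAt disk_mem_nhds
  have hU1 := (hU.deriv isOpen_disk).differentiableAt disk_mem_nhds
  rw [(he.deriv.trans hd).deriv_eq, (hasDerivAt_mul_zero (by fun_prop)).deriv]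
  simp

/-! ### The orders occurring in a simple cusp algebra -/

lemma IsSimpleCuspAlgebra.der_one {A : Subalgebra ℂ (𝔻 → ℂ)} (hA : IsSimpleCuspAlgebra A) :
    ∀ f ∈ A, der 1 0 f = 0 := by
  have h : con A ∈ {n : ℕ | ∀ f ∈ A, ∀ j, 1 ≤ j → j ≤ n → der j 0 f = 0} := by
    refine Nat.sSup_mem ⟨0, fun f _ j h1 h2 => by omega⟩ ?_
    -- An unbounded set has `sSup = 0`, whereas `con A = 1`.
    by_contra hb
    have h0 : con A = 0 := Nat.sSup_of_not_bddAbove hb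
    have := hA.2
    omega
  rw [hA.2] at h
  exact fun f hf => h f hf 1 le_rfl le_rfl

lemma IsSimpleCuspAlgebra.not_lead_one {A : Subalgebra ℂ (𝔻 → ℂ)} (hA : IsSimpleCuspAlgebra A)
    {f : 𝔻 → ℂ} (hf : f ∈ A) : ¬ Lead 1 f :=
  fun h => der_one_of_lead (hA.1.1 hf) h (hA.der_one f hf)

lemma IsSimpleCuspAlgebra.exists_lead_two {A : Subalgebra ℂ (𝔻 → ℂ)}
    (hA : IsSimpleCuspAlgebra A) : ∃ p ∈ A, Lead 2 p := by
  have h2 : ∃ f ∈ A, der 2 0 f ≠ 0 := by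
    by_contra! h
    have hb : BddAbove {n : ℕ | ∀ f ∈ A, ∀ j, 1 ≤ j → j ≤ n → der j 0 f = 0} := by
      by_contra hb
      have h0 : con A = 0 := Nat.sSup_of_not_bddAbove hb
      have := hA.2
      omega
    have : 2 ≤ con A := le_csSup hb fun f hf j h1 hj => by
      obtain rfl | rfl : j = 1 ∨ j = 2 := by omega
      · exact hA.der_one f hf
      · exact h f hf
    have := hA.2
    omega
  obtain ⟨f, hf, hf2⟩ := h2
  have hp : f - algebraMap ℂ (𝔻 → ℂ) (f d0) ∈ A := A.sub_mem hf (A.algebraMap_mem _)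
  refine ⟨_, hp, ?_⟩
  have h1 : f - algebraMap ℂ (𝔻 → ℂ) (f d0) ∈ zO 1 := by
    obtain ⟨v, hv, h⟩ := exists_eq_zfun_mul (isHolo_sub_const (hA.1.1 hf) (f d0)) (by simp)
    exact ⟨v, hv, by rw [h, pow_one]⟩
  have h2 := (mem_succ_or_lead h1).resolve_right (hA.not_lead_one hp)
  exact (mem_succ_or_lead h2).resolve_left fun h3 => hf2 (der_two_eq_zero (hA.1.1 hf) _ h3)

/-! ### Codimension -/

/-- The combination `∑ cᵢ z^(2i+1)`, as a linear function of its `m` coefficients. -/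
def oddSum (m : ℕ) : (Fin m → ℂ) →ₗ[ℂ] HolDisk.toSubmodule :=
  ∑ i : Fin m, (LinearMap.proj i).smulRight
    (⟨zfun ^ (2 * (i : ℕ) + 1), isHolo_pow isHolo_zfun _⟩ : HolDisk.toSubmodule)

lemma oddSum_coe (m : ℕ) (c : Fin m → ℂ) :
    (oddSum m c : 𝔻 → ℂ) = ∑ i : Fin m, c i • zfun ^ (2 * (i : ℕ) + 1) := by
  simp [oddSum, LinearMap.sum_apply]

/-- If the odd orders below `2m + 1` do not occur in `A`, then `z, z³, …, z^(2m-1)` are linearly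
independent modulo `A`: the lowest nonvanishing term of a combination would be an odd order. -/
lemma oddSum_coeff_eq_zero {A : Subalgebra ℂ (𝔻 → ℂ)} {m : ℕ}
    (hodd : ∀ i < m, ∀ f ∈ A, ¬ Lead (2 * i + 1) f) (c : Fin m → ℂ)
    (hc : (oddSum m c : 𝔻 → ℂ) ∈ A) : c = 0 := by
  rw [oddSum_coe] at hc
  have key : ∀ k, ∀ hk : k < m, c ⟨k, hk⟩ = 0 := by
    intro k
    induction k using Nat.strong_induction_on with
    | _ k ih =>
      intro hk
      have hrest : ∑ i ∈ Finset.univ.erase (⟨k, hk⟩ : Fin m), c i • zfun ^ (2 * (i : ℕ) + 1)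
          ∈ zO (2 * k + 1 + 1) := by
        refine Submodule.sum_mem _ fun i hi => ?_
        have hne : (i : ℕ) ≠ k := fun h => (Finset.mem_erase.1 hi).1 (Fin.ext h)
        rcases lt_or_gt_of_ne hne with h | h
        · rw [show c i = 0 from ih i h i.2, zero_smul]
          exact Submodule.zero_mem _
        · exact Submodule.smul_mem _ _ (zO_anti (by omega) (zfun_pow_mem _))
      rw [← Finset.add_sum_erase _ _ (Finset.mem_univ (⟨k, hk⟩ : Fin m))] at hc
      have hmem := Submodule.add_mem _
        (Submodule.smul_mem _ (c ⟨k, hk⟩) (zfun_pow_mem (2 * k + 1)))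
        (zO_anti (Nat.le_succ _) hrest)
      have hmem' := (mem_succ_or_lead hmem).resolve_right (hodd k hk _ hc)
      have hz := (Submodule.add_mem_iff_left _ hrest).1 hmem'
      by_contra hne
      exact (lead_zfun_pow (2 * k + 1)).notMem ((Submodule.smul_mem_iff _ hne).1 hz)
  ext i
  exact key i i.2

lemma cod_eq {A : Subalgebra ℂ (𝔻 → ℂ)} {m M : ℕ}
    (hM : (zO M : Set (𝔻 → ℂ)) ⊆ A)
    (heven : ∀ k, ∃ w ∈ A, Lead (2 * k) w)
    (hlarge : ∀ k, m ≤ k → ∃ w ∈ A, Lead (2 * k + 1) w)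
    (hodd : ∀ i < m, ∀ f ∈ A, ¬ Lead (2 * i + 1) f) : cod A = m := by
  let Q : HolDisk.toSubmodule →ₗ[ℂ] OmodA A := Submodule.mkQ _
  have hinj : Function.Injective (Q ∘ₗ oddSum m) := by
    rw [← LinearMap.ker_eq_bot, LinearMap.ker_eq_bot']
    intro c hc
    refine oddSum_coeff_eq_zero hodd c ?_
    simpa [Q] using hc
  have hspan : zO 0 ≤ A.toSubmodule ⊔
      (LinearMap.range (HolDisk.toSubmodule.subtype ∘ₗ oddSum m)) := by
    refine zO_le_of_lead _ (M := M) (fun f hf => Submodule.mem_sup_left (hM hf)) fun n _ => ?_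
    obtain ⟨k, rfl | rfl⟩ := Nat.even_or_odd' n
    · obtain ⟨w, hw, h⟩ := heven k
      exact ⟨w, Submodule.mem_sup_left hw, h⟩
    · rcases le_or_gt m k with h | h
      · obtain ⟨w, hw, h⟩ := hlarge k h
        exact ⟨w, Submodule.mem_sup_left hw, h⟩
      · refine ⟨_, Submodule.mem_sup_right ⟨Pi.single ⟨k, h⟩ 1, rfl⟩, ?_⟩
        have : (oddSum m (Pi.single ⟨k, h⟩ 1) : 𝔻 → ℂ) = zfun ^ (2 * k + 1) := by
          rw [oddSum_coe, Finset.sum_eq_single ⟨k, h⟩]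
          · simp
          · intro b _ hb
            simp [Pi.single_eq_of_ne hb]
          · simp
        simpa only [LinearMap.comp_apply, Submodule.subtype_apply, this] using
          lead_zfun_pow (2 * k + 1)
  have hsurj : Function.Surjective (Q ∘ₗ oddSum m) := by
    intro x
    obtain ⟨f, rfl⟩ := Submodule.mkQ_surjective _ x
    obtain ⟨a, ha, b, ⟨c, rfl⟩, hab⟩ :=
      Submodule.mem_sup.1 (hspan ⟨f.1, f.2, by simp⟩ : (f : 𝔻 → ℂ) ∈ _)
    refine ⟨c, ?_⟩
    refine (Submodule.Quotient.eq _).2 ?_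
    have : ((oddSum m c - f : HolDisk.toSubmodule) : 𝔻 → ℂ) = -a := by
      simp only [LinearMap.comp_apply, Submodule.subtype_apply] at hab
      rw [Submodule.coe_sub, ← hab]
      abel
    change ((oddSum m c - f : HolDisk.toSubmodule) : 𝔻 → ℂ) ∈ A
    rw [this]
    exact A.neg_mem ha
  have := (LinearEquiv.ofBijective (Q ∘ₗ oddSum m) ⟨hinj, hsurj⟩).finrank_eq
  rw [cod, ← this, Module.finrank_fin_fun]

/-- If `A` is a simple cusp algebra, then `ord(A) = 2 cod(A) - 1`. -/
theorem stmt_0 (A : Subalgebra ℂ (𝔻 → ℂ)) (hA : IsSimpleCuspAlgebra A) :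
    ord A = 2 * cod A - 1 := by
  obtain ⟨M, -, hM⟩ := hA.1.2.2
  obtain ⟨p, hpA, hp⟩ := hA.exists_lead_two
  have hex : ∃ k, ∃ q ∈ A, Lead (2 * k + 1) q :=
    ⟨M, _, hM (zO_anti (by omega) (zfun_pow_mem (2 * M + 1))), lead_zfun_pow _⟩
  -- `2m + 1` is the least odd order occurring in `A`.
  obtain ⟨m, ⟨q, hqA, hq⟩, hmin⟩ :
      ∃ m, (∃ q ∈ A, Lead (2 * m + 1) q) ∧ ∀ i < m, ∀ f ∈ A, ¬ Lead (2 * i + 1) f :=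
    ⟨Nat.find hex, Nat.find_spec hex, fun i hi f hf h => Nat.find_min hex hi ⟨f, hf, h⟩⟩
  have hm : 1 ≤ m := by
    by_contra! h
    obtain rfl : m = 0 := by omega
    exact hA.not_lead_one hqA hq
  have heven : ∀ k, ∃ w ∈ A, Lead (2 * k) w := fun k => ⟨p ^ k, A.pow_mem hpA k, hp.pow k⟩
  have hlarge : ∀ k, m ≤ k → ∃ w ∈ A, Lead (2 * k + 1) w := fun k hk => by
    refine ⟨q * p ^ (k - m), A.mul_mem hqA (A.pow_mem hpA _), ?_⟩
    have := hq.mul (hp.pow (k - m))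
    rwa [show 2 * m + 1 + 2 * (k - m) = 2 * k + 1 by omega] at this
  rw [cod_eq hM heven hlarge hmin]
  have hsub : zO (2 * m) ≤ A.toSubmodule := by
    refine zO_le_of_lead _ (M := M) hM fun n hn => ?_
    obtain ⟨k, rfl | rfl⟩ := Nat.even_or_odd' n
    · exact heven k
    · exact hlarge k (by omega)
  have hmem : 2 * m - 1 ∈ {k : ℕ | (zO (k + 1) : Set (𝔻 → ℂ)) ⊆ (A : Set (𝔻 → ℂ))} := by
    rw [Set.mem_ofPred_eq, show 2 * m - 1 + 1 = 2 * m by omega]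
    exact hsub
  refine le_antisymm (Nat.sInf_le hmem) (le_csInf ⟨_, hmem⟩ fun k hk => ?_)
  by_contra! hlt
  -- Otherwise `z^(2m-1)` lies in `A`, against the minimality of `m`.
  refine hmin (m - 1) (by omega) (zfun ^ (2 * (m - 1) + 1)) (hk ?_) (lead_zfun_pow _)
  exact zO_anti (by omega) (zfun_pow_mem _)

end
end

section
/- Let A be a simple cusp algebra. Then dim_ℂ(E_n) ∈ {1, 2} for every n ≥ 0, and there exists an integer n₀ ≥ 0 such that dim_ℂ(E_n) = 1 for all 0 ≤ n ≤ n₀ and dim_ℂ(E_n) = 2 for all n > n₀. -/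
/-!
Every holomorphic `f ∈ z^k O(𝔻)` has a leading coefficient: `f = z^k (c + z h)` with `h`
holomorphic (`exists_hasLead`), `c` is unique (`HasLead.unique`), and leading coefficients
multiply (`HasLead.mul`). Since `con A = 1`, every element of `A` has vanishing first derivative
at `0`, and after normalisation some `p ∈ A` has the form `z² (1 + z h)` (`exists_primitive`).

The class of `p ^ n` in `E_n` is nonzero. An element of `A_n` minus a suitable multiple of `p ^ n`
lies in `A ∩ z^(2n+1) O(𝔻)`, so `E_n` is spanned by that class and, if `A` has an element
`z^(2n+1) (1 + z h)`, the class of this element; hence `dim E_n` is `2` or `1` according to whether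
`A` has an element of exact order `2n + 1` (`finrank_En_two`, `finrank_En_one`). The property of
having such an element passes from `n` to `n + 1` on multiplying by `p`, fails for `n = 0` because
first derivatives vanish, and holds for large `n` because `z^m O(𝔻) ⊆ A`.
-/

open scoped Classical

noncomputable section

/-! ### Leading coefficients at the origin -/

/-- `HasLead k c f`: `f = z^k (c + z h)` for a holomorphic `h`, that is, `f` is a holomorphic
function vanishing to order at least `k` at `0` with `k`-th Taylor coefficient `c` (possibly `0`). -/
def HasLead (k : ℕ) (c : ℂ) (f : 𝔻 → ℂ) : Prop :=
  ∃ h ∈ HolDisk, f = zfun ^ k * (algebraMap ℂ (𝔻 → ℂ) c + zfun * h)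

lemma zfun_mem : zfun ∈ HolDisk := ⟨id, differentiableOn_id, fun _ => rfl⟩

lemma exists_eq_const_add {f : 𝔻 → ℂ} (hf : f ∈ HolDisk) :
    ∃ c : ℂ, ∃ h ∈ HolDisk, f = algebraMap ℂ (𝔻 → ℂ) c + zfun * h := by
  obtain ⟨F, hF, hfF⟩ := hf
  refine ⟨F 0, fun z => dslope F 0 z,
    ⟨dslope F 0, (Complex.differentiableOn_dslope disk_mem_nhds).2 hF, fun _ => rfl⟩, ?_⟩
  ext z
  have := sub_smul_dslope F 0 z
  simp only [sub_zero, smul_eq_mul] at this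
  simp [zfun, this, hfF z]

lemma exists_hasLead {k : ℕ} {f : 𝔻 → ℂ} (hf : f ∈ zO k) : ∃ c, HasLead k c f := by
  obtain ⟨g, hg, rfl⟩ := hf
  obtain ⟨c, h, hh, rfl⟩ := exists_eq_const_add hg
  exact ⟨c, h, hh, rfl⟩

lemma HasLead.mem_zO {k : ℕ} {c : ℂ} {f : 𝔻 → ℂ} (hf : HasLead k c f) : f ∈ zO k := by
  obtain ⟨h, hh, rfl⟩ := hf
  exact ⟨_, add_mem (HolDisk.algebraMap_mem c) (mul_mem zfun_mem hh), rfl⟩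

lemma hasLead_zero_iff {k : ℕ} {f : 𝔻 → ℂ} : HasLead k 0 f ↔ f ∈ zO (k + 1) := by
  constructor
  · rintro ⟨h, hh, rfl⟩
    exact ⟨h, hh, by simp; ring⟩
  · rintro ⟨h, hh, rfl⟩
    exact ⟨h, hh, by simp; ring⟩

lemma zO_anti_s3 {k l : ℕ} (h : k ≤ l) {f : 𝔻 → ℂ} (hf : f ∈ zO l) : f ∈ zO k := by
  obtain ⟨g, hg, rfl⟩ := hf
  obtain ⟨d, rfl⟩ := Nat.exists_eq_add_of_le h
  exact ⟨zfun ^ d * g, mul_mem (pow_mem zfun_mem d) (show g ∈ HolDisk from hg), by ring⟩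

lemma HasLead.add {k : ℕ} {c d : ℂ} {f g : 𝔻 → ℂ} (hf : HasLead k c f) (hg : HasLead k d g) :
    HasLead k (c + d) (f + g) := by
  obtain ⟨h, hh, rfl⟩ := hf
  obtain ⟨h', hh', rfl⟩ := hg
  exact ⟨h + h', add_mem hh hh', by rw [map_add]; ring⟩

lemma HasLead.smul {k : ℕ} {c : ℂ} {f : 𝔻 → ℂ} (hf : HasLead k c f) (a : ℂ) :
    HasLead k (a * c) (a • f) := by
  obtain ⟨h, hh, rfl⟩ := hf
  exact ⟨a • h, HolDisk.smul_mem hh a, by simp only [Algebra.smul_def, map_mul]; ring⟩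

lemma HasLead.mul {k l : ℕ} {c d : ℂ} {f g : 𝔻 → ℂ} (hf : HasLead k c f) (hg : HasLead l d g) :
    HasLead (k + l) (c * d) (f * g) := by
  obtain ⟨h, hh, rfl⟩ := hf
  obtain ⟨h', hh', rfl⟩ := hg
  refine ⟨algebraMap ℂ (𝔻 → ℂ) c * h' + algebraMap ℂ (𝔻 → ℂ) d * h + zfun * (h * h'),
    add_mem (add_mem (mul_mem (HolDisk.algebraMap_mem c) hh')
      (mul_mem (HolDisk.algebraMap_mem d) hh)) (mul_mem zfun_mem (mul_mem hh hh')), ?_⟩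
  rw [map_mul]
  ring

lemma hasLead_one : HasLead 0 1 (1 : 𝔻 → ℂ) := ⟨0, zero_mem _, by simp⟩

lemma HasLead.pow {p : 𝔻 → ℂ} (hp : HasLead 2 1 p) (n : ℕ) : HasLead (2 * n) 1 (p ^ n) := by
  induction n with
  | zero => simpa using hasLead_one
  | succ n ih => simpa [pow_succ, mul_add] using ih.mul hp

/-- The zero function has no nonzero leading coefficient: dividing by `z^k` off the origin gives
`c + z h = 0` there, and hence at the origin by continuity. -/
lemma HasLead.eq_zero {k : ℕ} {c : ℂ} (h0 : HasLead k c (0 : 𝔻 → ℂ)) : c = 0 := by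
  obtain ⟨h, ⟨H, hH, hhH⟩, e⟩ := h0
  have hc : ContinuousAt (fun z => c + z * H z) 0 :=
    continuousAt_const.add (continuousAt_id.mul (hH.continuousOn.continuousAt disk_mem_nhds))
  have h1 : Filter.Tendsto (fun z => c + z * H z) (nhdsWithin 0 {0}ᶜ) (nhds c) := by
    simpa using hc.tendsto.mono_left (nhdsWithin_le_nhds (s := {0}ᶜ))
  have h2 : (fun z => c + z * H z) =ᶠ[nhdsWithin 0 {0}ᶜ] fun _ => 0 := by
    filter_upwards [nhdsWithin_le_nhds disk_mem_nhds, self_mem_nhdsWithin] with z hz hz0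
    have := congrFun e ⟨z, hz⟩
    have hz0' : z ≠ 0 := hz0
    simpa [zfun, hz0', hhH] using this.symm
  exact tendsto_nhds_unique (h1.congr' h2) tendsto_const_nhds |>.symm ▸ rfl

lemma HasLead.unique {k : ℕ} {c d : ℂ} {f : 𝔻 → ℂ} (hc : HasLead k c f) (hd : HasLead k d f) :
    c = d := by
  have := (hc.add (hd.smul (-1)))
  rw [neg_one_smul, add_neg_cancel] at this
  linear_combination this.eq_zero

/-! ### Derivatives at the origin and the contact of an algebra -/

lemma der_eq {f : 𝔻 → ℂ} {F : ℂ → ℂ} (hF : DifferentiableOn ℂ F 𝔻) (hf : ∀ z : 𝔻, f z = F z)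
    (j : ℕ) : der j 0 f = iteratedDeriv j F 0 := by
  have h : IsHolo f := ⟨F, hF, hf⟩
  rw [der, dif_pos h]
  apply Filter.EventuallyEq.iteratedDeriv_eq
  filter_upwards [disk_mem_nhds] with z hz
  rw [← h.choose_spec.2 ⟨z, hz⟩, hf]

lemma hasDerivAt_const_add_mul {G : ℂ → ℂ} (hG : DifferentiableOn ℂ G 𝔻) (c : ℂ) {z : ℂ}
    (hz : z ∈ 𝔻) : HasDerivAt (fun z => c + z * G z) (G z + z * deriv G z) z := by
  have hd : HasDerivAt G (deriv G z) z :=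
    (hG.differentiableAt (Metric.isOpen_ball.mem_nhds hz)).hasDerivAt
  simpa using ((hasDerivAt_id z).mul hd).const_add c

/-- The first two derivatives at `0` of `c₀ + c₁ z + c₂ z² + z³ h`. -/
lemma der_one_two {f h : 𝔻 → ℂ} {c₀ c₁ c₂ : ℂ} (hh : h ∈ HolDisk)
    (hf : f = algebraMap ℂ (𝔻 → ℂ) c₀ + zfun * (algebraMap ℂ (𝔻 → ℂ) c₁ +
      zfun * (algebraMap ℂ (𝔻 → ℂ) c₂ + zfun * h))) :
    der 1 0 f = c₁ ∧ der 2 0 f = 2 * c₂ := by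
  obtain ⟨H, hH, hhH⟩ := hh
  have d0 : (0 : ℂ) ∈ 𝔻 := zero_mem_disk
  have hK : DifferentiableOn ℂ (fun z => c₂ + z * H z) 𝔻 := by fun_prop
  have hG : DifferentiableOn ℂ (fun z => c₁ + z * (c₂ + z * H z)) 𝔻 := by fun_prop
  have hF : DifferentiableOn ℂ (fun z => c₀ + z * (c₁ + z * (c₂ + z * H z))) 𝔻 := by fun_prop
  have e : ∀ z : 𝔻, f z = (fun z => c₀ + z * (c₁ + z * (c₂ + z * H z))) z := by
    intro z; simp [hf, zfun, hhH]
  rw [der_eq hF e, der_eq hF e]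
  constructor
  · rw [iteratedDeriv_one, (hasDerivAt_const_add_mul hG c₀ d0).deriv]
    simp
  · have h1 : deriv (fun z => c₀ + z * (c₁ + z * (c₂ + z * H z))) =ᶠ[nhds 0]
        fun z => (c₁ + z * (c₂ + z * H z)) +
          z * deriv (fun z => c₁ + z * (c₂ + z * H z)) z := by
      filter_upwards [disk_mem_nhds] with z hz
      exact (hasDerivAt_const_add_mul hG c₀ hz).deriv
    have hG' := hasDerivAt_const_add_mul hK c₁ d0
    have h2 := hG'.add (hasDerivAt_const_add_mul (hG.deriv Metric.isOpen_ball) 0 d0)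
    have h3 := h2.deriv
    rw [iteratedDeriv_succ, iteratedDeriv_one, h1.deriv_eq]
    simp only [zero_add, zero_mul, add_zero, hG'.deriv] at h3
    rw [two_mul]
    exact h3

/-- What `con A = 1` means once junk values of `sSup` are excluded. -/
lemma der_of_con_eq_one {A : Subalgebra ℂ (𝔻 → ℂ)} (hA : con A = 1) :
    (∀ f ∈ A, der 1 0 f = 0) ∧ ∃ f ∈ A, der 2 0 f ≠ 0 := by
  set S := {n : ℕ | ∀ f ∈ A, ∀ j, 1 ≤ j → j ≤ n → der j 0 f = 0} with hS
  have hS1 : sSup S = 1 := hA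
  -- `sSup` of an unbounded set of naturals is `0`, so `S` is bounded.
  have hb : BddAbove S := by
    by_contra hb
    rw [Nat.sSup_of_not_bddAbove hb] at hS1
    omega
  have hne : S.Nonempty := ⟨0, fun f _ j h1 h0 => by omega⟩
  have h1 : 1 ∈ S := hS1 ▸ Nat.sSup_mem hne hb
  have h2 : 2 ∉ S := fun h => by
    have := le_csSup hb h
    omega
  have h1' : ∀ f ∈ A, der 1 0 f = 0 := fun f hf => h1 f hf 1 le_rfl le_rfl
  refine ⟨h1', ?_⟩
  by_contra! hc
  refine h2 fun f hf j hj1 hj2 => ?_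
  interval_cases j
  exacts [h1' f hf, hc f hf]

lemma exists_expansion {f : 𝔻 → ℂ} (hf : f ∈ HolDisk) : ∃ c₀ c₁ c₂ : ℂ, ∃ h ∈ HolDisk,
    f = algebraMap ℂ (𝔻 → ℂ) c₀ + zfun * (algebraMap ℂ (𝔻 → ℂ) c₁ +
      zfun * (algebraMap ℂ (𝔻 → ℂ) c₂ + zfun * h)) := by
  obtain ⟨c₀, g, hg, rfl⟩ := exists_eq_const_add hf
  obtain ⟨c₁, k, hk, rfl⟩ := exists_eq_const_add hg
  obtain ⟨c₂, h, hh, rfl⟩ := exists_eq_const_add hk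
  exact ⟨c₀, c₁, c₂, h, hh, rfl⟩

/-- Multiplication by such a `p` carries `A_n` to `A_(n+1)` and preserves leading coefficients. -/
lemma exists_primitive {A : Subalgebra ℂ (𝔻 → ℂ)} (hA : IsSimpleCuspAlgebra A) :
    ∃ p ∈ A, HasLead 2 1 p := by
  obtain ⟨h1, f, hf, hf2⟩ := der_of_con_eq_one hA.2
  obtain ⟨c₀, c₁, c₂, h, hh, e⟩ := exists_expansion (hA.1.1 hf)
  obtain ⟨d1, d2⟩ := der_one_two hh e
  rw [h1 f hf] at d1
  have hc2 : c₂ ≠ 0 := by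
    rintro rfl
    simp [d2] at hf2
  refine ⟨c₂⁻¹ • (f - algebraMap ℂ (𝔻 → ℂ) c₀),
    A.smul_mem (sub_mem hf (A.algebraMap_mem c₀)) _, ?_⟩
  have : HasLead 2 c₂ (f - algebraMap ℂ (𝔻 → ℂ) c₀) :=
    ⟨h, hh, by rw [e, ← d1, map_zero]; ring⟩
  simpa [hc2] using this.smul c₂⁻¹

/-- Every element of `A` is congruent to a constant modulo `z² O(𝔻)`. -/
lemma hasLead_one_eq_zero {A : Subalgebra ℂ (𝔻 → ℂ)} (hA : IsSimpleCuspAlgebra A) {f : 𝔻 → ℂ}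
    (hf : f ∈ A) {c : ℂ} (hc : HasLead 1 c f) : c = 0 := by
  obtain ⟨h, hh, e⟩ := hc
  obtain ⟨c₂, k, hk, rfl⟩ := exists_eq_const_add hh
  have := (der_one_two (f := f) (c₀ := 0) (c₁ := c) (c₂ := c₂) hk (by rw [e, map_zero]; ring)).1
  rw [← this, (der_of_con_eq_one hA.2).1 f hf]

/-! ### The dimension of `E_n` -/

section Graded

variable {A : Subalgebra ℂ (𝔻 → ℂ)} {n : ℕ}

/-- The class in `E_n` of an element of `A_n`. -/
abbrev cls (A : Subalgebra ℂ (𝔻 → ℂ)) (n : ℕ) (f : An A n) : En A n :=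
  Submodule.Quotient.mk f

lemma cls_eq_zero_iff (f : An A n) : cls A n f = 0 ↔ (f : 𝔻 → ℂ) ∈ zO (2 * n + 2) := by
  rw [cls, Submodule.Quotient.mk_eq_zero, Submodule.mem_comap]
  exact ⟨fun h => h.2, fun h => ⟨f.2.1, h⟩⟩

/-- Subtracting a multiple of `q = z^(2n) (1 + ⋯)` raises the order of an element of `A_n`. -/
lemma exists_sub_hasLead {q f : 𝔻 → ℂ} (hq : HasLead (2 * n) 1 q) (hf : f ∈ zO (2 * n)) :
    ∃ a d : ℂ, HasLead (2 * n + 1) d (f - a • q) := by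
  obtain ⟨a, ha⟩ := exists_hasLead hf
  have h := ha.add (hq.smul (-a))
  rw [mul_one, add_neg_cancel, neg_smul, ← sub_eq_add_neg] at h
  exact ⟨a, exists_hasLead (hasLead_zero_iff.1 h)⟩

lemma finrank_En_one {q : 𝔻 → ℂ} (hqA : q ∈ A) (hq : HasLead (2 * n) 1 q)
    (hP : ¬ ∃ r ∈ A, HasLead (2 * n + 1) 1 r) : Module.finrank ℂ (En A n) = 1 := by
  let u : An A n := ⟨q, hqA, hq.mem_zO⟩
  refine finrank_eq_one (cls A n u) ?_ ?_
  · rw [Ne, cls_eq_zero_iff]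
    intro h
    exact one_ne_zero (hq.unique (hasLead_zero_iff.2 (zO_anti_s3 (Nat.le_succ _) h)))
  · intro w
    obtain ⟨f, rfl⟩ := Submodule.Quotient.mk_surjective _ w
    obtain ⟨hfA, hfz⟩ := f.2
    obtain ⟨a, d, h⟩ := exists_sub_hasLead hq hfz
    have hmem : (f : 𝔻 → ℂ) - a • q ∈ A := sub_mem hfA (A.smul_mem hqA a)
    have hd : d = 0 := by
      by_contra hd
      refine hP ⟨_, A.smul_mem hmem d⁻¹, ?_⟩
      simpa [hd] using h.smul d⁻¹
    subst hd
    have h0 : cls A n (f - a • u) = 0 := (cls_eq_zero_iff _).2 (hasLead_zero_iff.1 h)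
    refine ⟨a, ?_⟩
    rw [cls, Submodule.Quotient.mk_sub, Submodule.Quotient.mk_smul, sub_eq_zero] at h0
    exact h0.symm

lemma finrank_En_two {q r : 𝔻 → ℂ} (hqA : q ∈ A) (hq : HasLead (2 * n) 1 q)
    (hrA : r ∈ A) (hr : HasLead (2 * n + 1) 1 r) : Module.finrank ℂ (En A n) = 2 := by
  let u : An A n := ⟨q, hqA, hq.mem_zO⟩
  let v : An A n := ⟨r, hrA, zO_anti_s3 (Nat.le_succ _) hr.mem_zO⟩
  let φ : ℂ × ℂ →ₗ[ℂ] En A n :=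
    (LinearMap.toSpanSingleton ℂ _ (cls A n u)).coprod (LinearMap.toSpanSingleton ℂ _ (cls A n v))
  have hφ : ∀ a d : ℂ, φ (a, d) = cls A n (a • u + d • v) := by
    intro a d
    simp [φ, cls]
  have hinj : Function.Injective φ := by
    rw [injective_iff_map_eq_zero]
    rintro ⟨a, d⟩ h
    rw [hφ, cls_eq_zero_iff] at h
    have hv : HasLead (2 * n) 0 (d • r) := by
      simpa using (hasLead_zero_iff.2 hr.mem_zO).smul d
    have ha : a = 0 := by
      have := ((hq.smul a).add hv).unique (hasLead_zero_iff.2 (zO_anti_s3 (Nat.le_succ _) h))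
      simpa using this
    subst ha
    have hd : d = 0 := by
      have h' : d • r ∈ zO (2 * n + 1 + 1) := by simpa [u, v] using h
      simpa using (hr.smul d).unique (hasLead_zero_iff.2 h')
    rw [hd]
    rfl
  have hsurj : Function.Surjective φ := by
    intro w
    obtain ⟨f, rfl⟩ := Submodule.Quotient.mk_surjective _ w
    obtain ⟨a, d, h⟩ := exists_sub_hasLead hq f.2.2
    refine ⟨(a, d), ?_⟩
    have h2 := h.add (hr.smul (-d))
    rw [mul_one, add_neg_cancel, hasLead_zero_iff] at h2
    have h0 : cls A n (f - (a • u + d • v)) = 0 := by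
      rw [cls_eq_zero_iff]
      convert h2 using 1
      simp [u, v]
      abel
    rw [hφ]
    rw [cls, Submodule.Quotient.mk_sub, sub_eq_zero] at h0
    exact h0.symm
  rw [← (LinearEquiv.ofBijective φ ⟨hinj, hsurj⟩).finrank_eq]
  simp

end Graded

/-- `dim E_n ∈ {1,2}` for all `n`, and there is `n₀` with `dim E_n = 1` for
`n ≤ n₀` and `dim E_n = 2` for `n > n₀`. -/
theorem stmt_3 (A : Subalgebra ℂ (𝔻 → ℂ)) (hA : IsSimpleCuspAlgebra A) :
    (∀ n : ℕ, Module.finrank ℂ (En A n) = 1 ∨ Module.finrank ℂ (En A n) = 2) ∧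
    ∃ n₀ : ℕ, (∀ n ≤ n₀, Module.finrank ℂ (En A n) = 1) ∧
      ∀ n, n₀ < n → Module.finrank ℂ (En A n) = 2 := by
  obtain ⟨p, hpA, hp⟩ := exists_primitive hA
  have hpow : ∀ n, p ^ n ∈ A ∧ HasLead (2 * n) 1 (p ^ n) := fun n => ⟨pow_mem hpA n, hp.pow n⟩
  let P : ℕ → Prop := fun n => ∃ r ∈ A, HasLead (2 * n + 1) 1 r
  have h1 : ∀ n, ¬ P n → Module.finrank ℂ (En A n) = 1 := fun n hn =>
    finrank_En_one (hpow n).1 (hpow n).2 hn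
  have h2 : ∀ n, P n → Module.finrank ℂ (En A n) = 2 := by
    rintro n ⟨r, hrA, hr⟩
    exact finrank_En_two (hpow n).1 (hpow n).2 hrA hr
  have hP0 : ¬ P 0 := by
    rintro ⟨r, hrA, hr⟩
    exact one_ne_zero (hasLead_one_eq_zero hA hrA hr)
  have hPsucc : ∀ n, P n → P (n + 1) := by
    rintro n ⟨r, hrA, hr⟩
    refine ⟨r * p, mul_mem hrA hpA, ?_⟩
    have := hr.mul hp
    rwa [one_mul, show 2 * n + 1 + 2 = 2 * (n + 1) + 1 by ring] at this
  have hPex : ∃ n, P n := by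
    obtain ⟨m, -, hm⟩ := hA.1.2.2
    have hz : HasLead (2 * m + 1) 1 (zfun ^ (2 * m + 1)) := ⟨0, zero_mem _, by simp⟩
    exact ⟨m, _, hm (zO_anti_s3 (by omega) hz.mem_zO), hz⟩
  refine ⟨fun n => ?_, Nat.find hPex - 1, fun n hn => h1 n ?_, fun n hn => h2 n ?_⟩
  · by_cases h : P n
    exacts [Or.inr (h2 n h), Or.inl (h1 n h)]
  · -- `Nat.find hPex` is positive because `P 0` fails.
    have hpos : Nat.find hPex ≠ 0 := fun h => hP0 (h ▸ Nat.find_spec hPex)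
    exact Nat.find_min hPex (by omega)
  · exact Nat.le_induction (P := fun n _ => P n) (Nat.find_spec hPex)
      (fun k _ hk => hPsucc k hk) n (by omega)

end
end

section
/- Let A be a simple cusp algebra and n ≥ 0. Then dim_ℂ(E_n) = 2 if and only if both of the functions z ↦ z^{2n} and z ↦ z^{2n+1} belong to A. -/
/-!
Since `con A = 1`, the algebra `A` contains `p = z² u` with `u` holomorphic and `u(0) ≠ 0`
(`exists_order_two`).

The quotient `zO (2n) / zO (2n+2)` has the classes of `z^{2n}, z^{2n+1}` as a basis, hence dimension
two, and `E_n` embeds in it. So `dim E_n = 2` exactly when every element of `zO (2n)` lies in `A`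
modulo `zO (2n+2)` (`finrank_En_eq_two_iff`). This last condition follows at once from
`z^{2n}, z^{2n+1} ∈ A`. Conversely, multiplying by `p` carries the condition from `n` to `n + 1`
(`step`), hence to all larger indices, so that every element of `zO (2n)` lies in `A` modulo
`zO (2n+2j)` for all `j`. For large `j` the latter space is contained in `A`, so `zO (2n) ⊆ A`, and
in particular `z^{2n}` and `z^{2n+1}` belong to `A`.
-/

open scoped Classical

noncomputable section

/-- The constant function with value `c`. -/
abbrev cst (c : ℂ) : 𝔻 → ℂ := algebraMap ℂ (𝔻 → ℂ) c

lemma cst_mem (A : Subalgebra ℂ (𝔻 → ℂ)) (c : ℂ) : cst c ∈ A := A.algebraMap_mem c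

lemma exists_divided {f : 𝔻 → ℂ} (hf : f ∈ HolDisk) :
    ∃ g ∈ HolDisk, f = cst (f d0) + zfun * g := by
  obtain ⟨F, hF, hfF⟩ := hf
  refine ⟨fun z => dslope F 0 z, ⟨dslope F 0, ?_, fun _ => rfl⟩, ?_⟩
  · exact (Complex.differentiableOn_dslope (Metric.ball_mem_nhds 0 one_pos)).2 hF
  · ext z
    have := sub_smul_dslope F 0 (z : ℂ)
    have h0 : f d0 = F 0 := hfF d0
    simp only [sub_zero, smul_eq_mul] at this
    simp [zfun, this, hfF z, h0]

lemma exists_divided_two {f : 𝔻 → ℂ} (hf : f ∈ HolDisk) :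
    ∃ a b : ℂ, ∃ g ∈ HolDisk, f = cst a + cst b * zfun + zfun ^ 2 * g := by
  obtain ⟨g, hg, h1⟩ := exists_divided hf
  obtain ⟨k, hk, h2⟩ := exists_divided hg
  refine ⟨f d0, g d0, k, hk, ?_⟩
  rw [h2] at h1
  linear_combination h1

/-- Cancellation of `z`: the two sides agree off the origin, hence at the origin by continuity. -/
lemma zfun_cancel {f g : 𝔻 → ℂ} (hf : f ∈ HolDisk) (hg : g ∈ HolDisk)
    (h : zfun * f = zfun * g) : f = g := by
  obtain ⟨k, ⟨K, hK, hkK⟩, e⟩ := exists_divided (HolDisk.sub_mem hf hg)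
  have hz : ∀ z : 𝔻, (z : ℂ) ≠ 0 → f z = g z := fun z hz =>
    mul_left_cancel₀ hz (congrFun h z)
  obtain ⟨F, hF, hfF⟩ := hf
  obtain ⟨G, hG, hgG⟩ := hg
  have hn : 𝔻 ∈ nhds (0 : ℂ) := Metric.ball_mem_nhds 0 one_pos
  have h1 : Filter.Tendsto F (nhdsWithin 0 {0}ᶜ) (nhds (F 0)) :=
    ((hF.differentiableAt hn).continuousAt.tendsto).mono_left nhdsWithin_le_nhds
  have h2 : Filter.Tendsto G (nhdsWithin 0 {0}ᶜ) (nhds (G 0)) :=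
    ((hG.differentiableAt hn).continuousAt.tendsto).mono_left nhdsWithin_le_nhds
  have h3 : F =ᶠ[nhdsWithin 0 {0}ᶜ] G := by
    filter_upwards [mem_nhdsWithin_of_mem_nhds hn, self_mem_nhdsWithin] with z hz1 hz2
    have := hz ⟨z, hz1⟩ hz2
    rwa [hfF, hgG] at this
  have h4 : F 0 = G 0 := tendsto_nhds_unique h1 (h2.congr' h3.symm)
  ext z
  by_cases hz0 : (z : ℂ) = 0
  · rw [hfF, hgG, hz0, h4]
  · exact hz z hz0

lemma zfun_pow_cancel_s4 {f g : 𝔻 → ℂ} (hf : f ∈ HolDisk) (hg : g ∈ HolDisk) (n : ℕ)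
    (h : zfun ^ n * f = zfun ^ n * g) : f = g := by
  induction n with
  | zero => simpa using h
  | succ n ih =>
    refine ih (zfun_cancel (HolDisk.mul_mem (HolDisk.pow_mem zfun_mem n) hf)
      (HolDisk.mul_mem (HolDisk.pow_mem zfun_mem n) hg) ?_)
    linear_combination h

lemma zfun_d0 : zfun d0 = 0 := rfl

lemma zO_mem {m : ℕ} {g : 𝔻 → ℂ} (hg : g ∈ HolDisk) : zfun ^ m * g ∈ zO m := ⟨g, hg, rfl⟩

lemma zO_anti_s4 {m k : ℕ} (h : m ≤ k) : zO k ≤ zO m := by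
  rintro _ ⟨g, hg, rfl⟩
  obtain ⟨j, rfl⟩ := Nat.exists_eq_add_of_le h
  rw [pow_add, mul_assoc]
  exact zO_mem (HolDisk.mul_mem (HolDisk.pow_mem zfun_mem j) hg)

/-- The first two derivatives at the origin, read off from the Taylor expansion. -/
lemma der_expansion {f g : 𝔻 → ℂ} {a b : ℂ} (hf : f ∈ HolDisk) (hg : g ∈ HolDisk)
    (e : f = cst a + cst b * zfun + zfun ^ 2 * g) :
    der 1 0 f = b ∧ der 2 0 f = 2 * g d0 := by
  have hf' : IsHolo f := hf
  obtain ⟨G, hG, hgG⟩ := hg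
  have hn : 𝔻 ∈ nhds (0 : ℂ) := Metric.ball_mem_nhds 0 one_pos
  have hF := hf'.choose_spec.2
  simp only [der, dif_pos hf']
  set F := hf'.choose
  have hFe : F =ᶠ[nhds 0] fun z => a + b * z + z ^ 2 * G z := by
    filter_upwards [hn] with z hz
    rw [← hF ⟨z, hz⟩, e, ← hgG ⟨z, hz⟩]
    simp [zfun]
  have hGd : ∀ z ∈ 𝔻, HasDerivAt G (deriv G z) z := fun z hz =>
    (hG.differentiableAt (Metric.isOpen_ball.mem_nhds hz)).hasDerivAt
  have hd : deriv F =ᶠ[nhds 0] fun z => b + (2 * z * G z + z ^ 2 * deriv G z) := by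
    refine hFe.deriv.trans ?_
    filter_upwards [hn] with z hz
    have h := (((hasDerivAt_id z).const_mul b).const_add a).add
      (((hasDerivAt_id z).pow 2).mul (hGd z hz))
    refine HasDerivAt.deriv (f := fun z => a + b * z + z ^ 2 * G z) (h.congr_deriv ?_)
    simp
  have hG' : DifferentiableAt ℂ (deriv G) 0 :=
    ((hG.deriv Metric.isOpen_ball).differentiableAt hn)
  constructor
  · rw [iteratedDeriv_one, hd.eq_of_nhds]
    simp
  · rw [iteratedDeriv_succ, iteratedDeriv_one, hd.deriv_eq, hgG d0]
    have h := ((((hasDerivAt_id (0 : ℂ)).const_mul 2).mul (hGd 0 zero_mem_disk)).add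
      (((hasDerivAt_id (0 : ℂ)).pow 2).mul hG'.hasDerivAt)).const_add b
    refine HasDerivAt.deriv (f := fun z => b + (2 * z * G z + z ^ 2 * deriv G z))
      (h.congr_deriv ?_)
    simp [d0]

lemma exists_order_two {A : Subalgebra ℂ (𝔻 → ℂ)} (hA : IsSimpleCuspAlgebra A) :
    ∃ u ∈ HolDisk, u d0 ≠ 0 ∧ zfun ^ 2 * u ∈ A := by
  obtain ⟨⟨hle, -, -⟩, hc⟩ := hA
  set S := {n : ℕ | ∀ f ∈ A, ∀ j, 1 ≤ j → j ≤ n → der j 0 f = 0} with hS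
  have hc' : sSup S = 1 := hc
  -- The supremum of an unbounded set of naturals is the junk value `0`, so `con A = 1` excludes it.
  have hb : BddAbove S := by
    by_contra hb
    rw [csSup_of_not_bddAbove hb] at hc'
    simp at hc'
  have hne : S.Nonempty := ⟨0, fun f _ j h1 h2 => by omega⟩
  have h1 : 1 ∈ S := hc' ▸ Nat.sSup_mem hne hb
  have h2 : 2 ∉ S := fun h => by have := le_csSup hb h; omega
  simp only [hS, Set.mem_ofPred_eq, not_forall] at h2
  obtain ⟨f, hf, j, hj1, hj2, hj⟩ := h2
  have hf1 := h1 f hf 1 le_rfl le_rfl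
  obtain rfl : j = 2 := by
    rcases (show j = 1 ∨ j = 2 by omega) with rfl | rfl
    · exact absurd hf1 hj
    · rfl
  obtain ⟨a, b, g, hg, e⟩ := exists_divided_two (hle hf)
  obtain ⟨e1, e2⟩ := der_expansion (hle hf) hg e
  rw [hf1] at e1
  refine ⟨g, hg, fun h0 => hj (by rw [e2, h0, mul_zero]), ?_⟩
  have : zfun ^ 2 * g = f - cst a := by
    rw [e, ← e1]; simp
  rw [this]
  exact A.sub_mem hf (cst_mem A a)

/-- The classes of `z^m` and `z^{m+1}` form a basis of `zO m / zO (m+2)`. -/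
lemma finrank_zO_quotient (m : ℕ) :
    Module.finrank ℂ (zO m ⧸ (zO (m + 2)).comap (zO m).subtype) = 2 := by
  let Q := (zO (m + 2)).comap (zO m).subtype
  let e0 : zO m := ⟨zfun ^ m * 1, zO_mem HolDisk.one_mem⟩
  let e1 : zO m := ⟨zfun ^ m * zfun, zO_mem zfun_mem⟩
  let v : Fin 2 → (zO m ⧸ Q) := ![Q.mkQ e0, Q.mkQ e1]
  have hli : LinearIndependent ℂ v := by
    rw [LinearIndependent.pair_iff]
    intro s t hst
    rw [← map_smul, ← map_smul, ← map_add, Submodule.mkQ_apply,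
      Submodule.Quotient.mk_eq_zero] at hst
    obtain ⟨g, hg, h⟩ := hst
    have h' : s • (zfun ^ m * 1) + t • (zfun ^ m * zfun) = zfun ^ (m + 2) * g := h
    have hg' : zfun * g ∈ HolDisk := HolDisk.mul_mem zfun_mem hg
    have k1 : cst s + zfun * cst t = zfun * (zfun * g) := by
      refine zfun_pow_cancel_s4 (HolDisk.add_mem (cst_mem _ s)
        (HolDisk.mul_mem zfun_mem (cst_mem _ t))) (HolDisk.mul_mem zfun_mem hg') m ?_
      rw [Algebra.smul_def, Algebra.smul_def] at h'
      linear_combination h'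
    have hs : s = 0 := by simpa [zfun_d0] using congrFun k1 d0
    have k2 : cst t = zfun * g := by
      refine zfun_cancel (cst_mem _ t) hg' ?_
      rw [← k1, hs]; simp
    exact ⟨hs, by simpa [zfun_d0] using congrFun k2 d0⟩
  have hsp : ⊤ ≤ Submodule.span ℂ (Set.range v) := by
    rintro x -
    obtain ⟨⟨_, g, hg, rfl⟩, rfl⟩ := Q.mkQ_surjective x
    obtain ⟨a, b, k, hk, e⟩ := exists_divided_two hg
    have : Q.mkQ ⟨zfun ^ m * g, zO_mem hg⟩ = a • v 0 + b • v 1 := by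
      change _ = a • Q.mkQ e0 + b • Q.mkQ e1
      rw [← map_smul, ← map_smul, ← map_add, ← sub_eq_zero, ← map_sub, Submodule.mkQ_apply,
        Submodule.Quotient.mk_eq_zero]
      refine ⟨k, hk, ?_⟩
      change zfun ^ m * g - (a • (zfun ^ m * 1) + b • (zfun ^ m * zfun)) = _
      rw [Algebra.smul_def, Algebra.smul_def]
      linear_combination zfun ^ m * e
    rw [this]
    exact Submodule.add_mem _ (Submodule.smul_mem _ _ (Submodule.subset_span ⟨0, rfl⟩))
      (Submodule.smul_mem _ _ (Submodule.subset_span ⟨1, rfl⟩))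
  simpa using Module.finrank_eq_card_basis (Module.Basis.mk hli hsp)

/-- `dim E_n` is maximal exactly when the embedding `E_n → zO (2n) / zO (2n+2)` is onto. -/
lemma finrank_En_eq_two_iff (A : Subalgebra ℂ (𝔻 → ℂ)) (n : ℕ) :
    Module.finrank ℂ (En A n) = 2 ↔ zO (2 * n) ≤ A.toSubmodule ⊔ zO (2 * n + 2) := by
  let Q := (zO (2 * n + 2)).comap (zO (2 * n)).subtype
  have hV : Module.finrank ℂ (zO (2 * n) ⧸ Q) = 2 := finrank_zO_quotient (2 * n)
  have : FiniteDimensional ℂ (zO (2 * n) ⧸ Q) := Module.finite_of_finrank_eq_succ hV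
  let ι : An A n →ₗ[ℂ] zO (2 * n) := Submodule.inclusion inf_le_right
  let φ : An A n →ₗ[ℂ] (zO (2 * n) ⧸ Q) := Q.mkQ ∘ₗ ι
  have hker : LinearMap.ker φ = (An A (n + 1)).comap (An A n).subtype := by
    ext x
    rw [LinearMap.mem_ker, LinearMap.comp_apply, Submodule.mkQ_apply,
      Submodule.Quotient.mk_eq_zero]
    exact ⟨fun h => ⟨x.2.1, h⟩, fun h => h.2⟩
  have hr : Module.finrank ℂ (En A n) = Module.finrank ℂ (LinearMap.range φ) := by
    unfold En
    rw [← hker]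
    exact φ.quotKerEquivRange.finrank_eq
  have ht : Module.finrank ℂ (LinearMap.range φ) = 2 ↔ LinearMap.range φ = ⊤ :=
    ⟨fun h => Submodule.eq_top_of_finrank_eq (h.trans hV.symm), fun h => by
      rw [h, finrank_top, hV]⟩
  rw [hr, ht, LinearMap.range_eq_top]
  constructor
  · intro hs f hf
    obtain ⟨a, ha⟩ := hs (Q.mkQ ⟨f, hf⟩)
    have ha' : Q.mkQ (⟨f, hf⟩ - ι a) = 0 := by rw [map_sub, ← ha]; exact sub_self _
    rw [Submodule.mkQ_apply, Submodule.Quotient.mk_eq_zero] at ha'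
    have h2 : f - (a : 𝔻 → ℂ) ∈ zO (2 * n + 2) := ha'
    exact Submodule.mem_sup.2 ⟨a, a.2.1, _, h2, by simp⟩
  · intro hle x
    obtain ⟨⟨f, hf⟩, rfl⟩ := Q.mkQ_surjective x
    obtain ⟨a, ha, b, hb, e⟩ := Submodule.mem_sup.1 (hle hf)
    have ha' : a ∈ zO (2 * n) := by
      rw [eq_sub_of_add_eq e]
      exact Submodule.sub_mem _ hf (zO_anti_s4 (by omega) hb)
    refine ⟨⟨a, ha, ha'⟩, ?_⟩
    rw [← sub_eq_zero]
    change Q.mkQ ⟨a, ha'⟩ - Q.mkQ ⟨f, hf⟩ = 0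
    rw [← map_sub, Submodule.mkQ_apply, Submodule.Quotient.mk_eq_zero]
    change a - f ∈ zO (2 * n + 2)
    rw [← e, sub_add_cancel_left]
    exact Submodule.neg_mem _ hb

/-- Multiplication by `z² u ∈ A`, with `u` invertible at the origin, raises the index by two. -/
lemma step {A : Subalgebra ℂ (𝔻 → ℂ)} {u : 𝔻 → ℂ} (hu : u ∈ HolDisk) (hu0 : u d0 ≠ 0)
    (hp : zfun ^ 2 * u ∈ A) {m : ℕ} (h : zO m ≤ A.toSubmodule ⊔ zO (m + 2)) :
    zO (m + 2) ≤ A.toSubmodule ⊔ zO (m + 2 + 2) := by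
  rintro _ ⟨g, hg, rfl⟩
  obtain ⟨g0, g1, g2, hg2, eg⟩ := exists_divided_two hg
  obtain ⟨u0, u1, u2, hu2, eu⟩ := exists_divided_two hu
  have hu0' : u0 ≠ 0 := by
    rw [eu] at hu0
    simpa [zfun_d0] using hu0
  -- The linear polynomial `v = v0 + v1 z` solves `u v ≡ g` modulo `z²`.
  obtain ⟨v0, e0⟩ : ∃ v0, u0 * v0 = g0 := ⟨g0 / u0, by field_simp⟩
  obtain ⟨v1, e1⟩ : ∃ v1, u0 * v1 + u1 * v0 = g1 := ⟨(g1 - u1 * v0) / u0, by field_simp; ring⟩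
  have c0 : cst u0 * cst v0 = cst g0 := by rw [← map_mul, e0]
  have c1 : cst u0 * cst v1 + cst u1 * cst v0 = cst g1 := by
    rw [← map_mul, ← map_mul, ← map_add, e1]
  have hv : cst v0 + cst v1 * zfun ∈ HolDisk :=
    add_mem (cst_mem _ _) (mul_mem (cst_mem _ _) zfun_mem)
  obtain ⟨a, ha, _, ⟨w, hw, rfl⟩, e⟩ := Submodule.mem_sup.1 (h (zO_mem hv))
  refine Submodule.mem_sup.2 ⟨zfun ^ 2 * u * a, A.mul_mem hp ha, _,
    zO_mem (g := u * w - (cst u1 * cst v1 + u2 * (cst v0 + cst v1 * zfun) - g2)) ?_, ?_⟩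
  · exact sub_mem (mul_mem hu hw) (sub_mem (add_mem (mul_mem (cst_mem _ _) (cst_mem _ _))
      (mul_mem hu2 hv)) hg2)
  · linear_combination zfun ^ 2 * u * e - zfun ^ (m + 2) * eg
      + zfun ^ (m + 2) * (cst v0 + cst v1 * zfun) * eu + zfun ^ (m + 2) * c0
      + zfun ^ (m + 3) * c1

/-- `dim E_n = 2` iff both `z^{2n}` and `z^{2n+1}` belong to `A`. -/
theorem stmt_4 (A : Subalgebra ℂ (𝔻 → ℂ)) (hA : IsSimpleCuspAlgebra A) (n : ℕ) :
    Module.finrank ℂ (En A n) = 2 ↔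
      (zfun ^ (2 * n) ∈ A ∧ zfun ^ (2 * n + 1) ∈ A) := by
  rw [finrank_En_eq_two_iff]
  constructor
  · intro h
    obtain ⟨u, hu, hu0, hp⟩ := exists_order_two hA
    obtain ⟨⟨-, -, m, -, hm⟩, -⟩ := hA
    have hstep : ∀ j, zO (2 * n + 2 * j) ≤ A.toSubmodule ⊔ zO (2 * n + 2 * j + 2) := by
      intro j
      induction j with
      | zero => exact h
      | succ j ih => exact step hu hu0 hp ih
    have hall : ∀ j, zO (2 * n) ≤ A.toSubmodule ⊔ zO (2 * n + 2 * j) := by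
      intro j
      induction j with
      | zero => exact le_sup_right
      | succ j ih => exact ih.trans (sup_le le_sup_left (hstep j))
    have hA' : zO (2 * n) ≤ A.toSubmodule :=
      (hall m).trans (sup_le le_rfl ((zO_anti_s4 (by omega)).trans hm))
    refine ⟨hA' ⟨1, HolDisk.one_mem, by simp⟩, hA' ⟨zfun, zfun_mem, pow_succ _ _⟩⟩
  · rintro ⟨h0, h1⟩ _ ⟨g, hg, rfl⟩
    obtain ⟨a, b, k, hk, e⟩ := exists_divided_two hg
    refine Submodule.mem_sup.2 ⟨cst a * zfun ^ (2 * n) + cst b * zfun ^ (2 * n + 1),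
      A.add_mem (A.mul_mem (cst_mem A a) h0) (A.mul_mem (cst_mem A b) h1), _, zO_mem hk, ?_⟩
    linear_combination -zfun ^ (2 * n) * e

end
end
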